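/- arXiv:1905.01954 — 5 statements merged into one kernel-verified Lean document; each statement's English description precedes it below -/
import Mathlib

section
/- There is an absolute constant C > 0 such that the following holds. Let ℓ, h, k ∈ ℕ with 1 ≤ h < k and gcd(h,k) = 1, and let v_0, …, v_r be the denominators of the convergents of the continued fraction expansion of h/k. Then for every α ∈ (1/k)·ℤ one has |V₁(h/k, α)| ≤ ∑_{m=0}^{r−1} log(v_{m+1}/v_m)/v_m + C. -/
open Real Filter Finset

/-- The sawtooth function `((x))`: `0` if `x ∈ ℤ`, and `1/2 - {x}` otherwise. -/
noncomputable def sawtooth (x : ℝ) : ℝ := if Int.fract x = 0 then 0 else 1 / 2 - Int.fract x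

/-- Partial sums of the series defining `V₁(x, α) = 2 ∑_{m≥1} (cos(2πmα)/m)·((mx))`. -/
noncomputable def V1sum (x α : ℝ) (M : ℕ) : ℝ :=
  2 * ∑ m ∈ Finset.Icc 1 M, Real.cos (2 * π * m * α) / m * sawtooth (m * x)
lemma saw_add_int (y : ℝ) (n : ℤ) : sawtooth (y + n) = sawtooth y := by
  simp [sawtooth]

lemma saw_neg (y : ℝ) : sawtooth (-y) = - sawtooth y := by
  unfold sawtooth
  by_cases h : Int.fract y = 0
  · have : Int.fract (-y) = 0 := by rw [Int.fract_neg_eq_zero]; exact h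
    simp [h, this]
  · have h2 : Int.fract (-y) ≠ 0 := by rw [Ne, Int.fract_neg_eq_zero]; exact h
    rw [if_neg h, if_neg h2, Int.fract_neg h]; ring

lemma saw_abs (y : ℝ) : |sawtooth y| ≤ 1/2 := by
  unfold sawtooth
  split_ifs
  · norm_num
  · rw [abs_le]
    constructor <;> linarith [Int.fract_nonneg y, Int.fract_lt_one y]

lemma saw_mono {y z : ℝ} (h : y ≤ z) : sawtooth y + y ≤ sawtooth z + z := by
  have hf : (⌊y⌋ : ℤ) ≤ ⌊z⌋ := Int.floor_le_floor h
  have e1 := Int.floor_add_fract y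
  have e2 := Int.floor_add_fract z
  have p1 := Int.fract_nonneg y
  have p2 := Int.fract_nonneg z
  have p3 := Int.fract_lt_one y
  unfold sawtooth
  rcases eq_or_lt_of_le hf with h1 | h1
  · rw [h1] at e1
    split_ifs with a b b
    · linarith
    · linarith
    · exact absurd (le_antisymm (by linarith) p1) a
    · linarith
  · have h1' : (⌊y⌋ : ℝ) + 1 ≤ ⌊z⌋ := by exact_mod_cast h1
    split_ifs <;> linarith

/-- sums over a period -/
lemma sum_period (k : ℕ) (hk : 0 < k) (F : ℤ → ℝ) (hF : ∀ n, F (n + k) = F n)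
    (h j : ℤ) (hc : IsCoprime h (k : ℤ)) :
    ∑ c ∈ range k, F (h * c + j) = ∑ c ∈ range k, F c := by
  have : NeZero k := ⟨hk.ne'⟩
  have hper : Function.Periodic F (k : ℤ) := hF
  have hG : ∀ n : ℤ, F n = F (((n : ZMod k).val : ℕ) : ℤ) := by
    intro n
    rw [ZMod.val_intCast]
    have := hper.int_mul (n / k) (n % k)
    rw [← this]
    congr 1
    have := Int.emod_add_mul_ediv n k
    push_cast
    linarith
  have hS : ∀ G : ZMod k → ℝ, ∑ c ∈ range k, G (c : ZMod k) = ∑ z : ZMod k, G z := by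
    intro G
    refine Finset.sum_bij' (fun c _ => (c : ZMod k)) (fun z _ => z.val) ?_ ?_ ?_ ?_ ?_
    · simp
    · intro z _; simp [ZMod.val_lt]
    · intro c hc; simp at hc; exact ZMod.val_cast_of_lt hc
    · intro z _; simp
    · simp
  obtain ⟨a, b, hab⟩ := hc
  have hu : (a : ZMod k) * (h : ZMod k) = 1 := by
    have := congrArg (Int.cast : ℤ → ZMod k) hab
    simpa using this
  have l : ∑ c ∈ range k, F (h * c + j) =
      ∑ c ∈ range k, (fun z : ZMod k => F ((((h : ZMod k) * z + j).val : ℕ) : ℤ)) (c : ZMod k) := by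
    refine Finset.sum_congr rfl fun c _ => ?_
    rw [hG]; simp
  have r : ∑ c ∈ range k, F c =
      ∑ c ∈ range k, (fun z : ZMod k => F (((z).val : ℕ) : ℤ)) (c : ZMod k) := by
    refine Finset.sum_congr rfl fun c _ => ?_
    rw [hG]; simp
  rw [l, r, hS (fun z : ZMod k => F ((((h : ZMod k) * z + j).val : ℕ) : ℤ)),
    hS (fun z : ZMod k => F (((z).val : ℕ) : ℤ))]
  refine Finset.sum_bij' (fun z _ => (h : ZMod k) * z + j) (fun z _ => (a : ZMod k) * (z - j)) ?_ ?_ ?_ ?_ ?_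
  · simp
  · simp
  · intro z _; simp; rw [← mul_assoc, hu, one_mul]
  · intro z _; show (h : ZMod k) * ((a : ZMod k) * (z - j)) + j = z; rw [← mul_assoc, mul_comm (h : ZMod k), hu]; ring
  · simp

lemma saw_dist1 (q : ℕ) (hq : 0 < q) (y : ℝ) (h0 : 0 ≤ y) (h1 : y < 1 / q) :
    |∑ c ∈ range q, sawtooth (y + c / q)| ≤ 1 / 2 := by
  have hq' : (0:ℝ) < q := by exact_mod_cast hq
  have hfr : ∀ c ∈ range q, Int.fract (y + c / q) = y + c / q := by
    intro c hc
    rw [Int.fract_eq_self]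
    refine ⟨by positivity, ?_⟩
    have : (c:ℝ) + 1 ≤ q := by exact_mod_cast (Finset.mem_range.1 hc)
    have : (c:ℝ)/q + 1/q ≤ 1 := by rw [← add_div, div_le_one hq']; exact this
    linarith
  have hsum : ∀ n : ℕ, ∑ c ∈ range n, (1/2 - (y + (c:ℝ) / q)) = n/2 - n*y - n*(n-1)/(2*q) := by
    intro n
    induction n with
    | zero => simp
    | succ n ih => rw [Finset.sum_range_succ, ih]; push_cast; field_simp; ring
  have hs := hsum q
  have hs' : ∑ c ∈ range q, (1/2 - (y + (c:ℝ) / q)) = 1/2 - q*y := by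
    rw [hs]; field_simp; ring
  have hqy : q * y < 1 := by rw [lt_div_iff₀ hq'] at h1; linarith
  rcases eq_or_lt_of_le h0 with h | h
  · obtain ⟨n, rfl⟩ : ∃ n, q = n + 1 := ⟨q - 1, by omega⟩
    rw [Finset.sum_range_succ'] at hs' ⊢
    have : ∑ c ∈ range n, sawtooth (y + ((c+1:ℕ):ℝ) / ((n+1:ℕ):ℝ)) = ∑ c ∈ range n, (1/2 - (y + ((c+1:ℕ):ℝ) / ((n+1:ℕ):ℝ))) := by
      refine Finset.sum_congr rfl fun c hc => ?_
      unfold sawtooth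
      rw [hfr (c+1) (by simp at hc ⊢; exact hc), if_neg]
      have : (0:ℝ) < ((c+1:ℕ):ℝ) / ((n+1:ℕ):ℝ) := by positivity
      linarith
    rw [this]
    have h00 : sawtooth (y + ((0:ℕ):ℝ)/((n+1:ℕ):ℝ)) = 0 := by rw [← h]; simp [sawtooth]
    rw [h00]
    rw [← h] at hs' ⊢
    simp only [mul_zero, Nat.cast_zero, zero_div, zero_add, sub_zero, add_zero] at hs' ⊢
    have : ∑ c ∈ range n, (1/2 - (((c+1:ℕ):ℝ) / ((n+1:ℕ):ℝ))) = 0 := by linarith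
    rw [this]; norm_num
  · have : ∑ c ∈ range q, sawtooth (y + c / q) = ∑ c ∈ range q, (1/2 - (y + (c:ℝ) / q)) := by
      refine Finset.sum_congr rfl fun c hc => ?_
      unfold sawtooth
      rw [hfr c hc, if_neg]
      have : (0:ℝ) ≤ (c:ℝ) / q := by positivity
      linarith
    rw [this, hs', abs_le]
    constructor <;> nlinarith

lemma saw_dist (p : ℤ) (q : ℕ) (hq : 0 < q) (hc : IsCoprime p (q:ℤ)) (y : ℝ) :
    |∑ c ∈ range q, sawtooth (y + c * (p / q))| ≤ 1 / 2 := by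
  have hq' : (0:ℝ) < q := by exact_mod_cast hq
  set z := Int.fract (q * y) / q with hz
  have hy : y = z + ⌊q * y⌋ / q := by
    have := Int.floor_add_fract (q * y)
    rw [hz, ← add_div, eq_div_iff hq'.ne']; linarith
  have key := sum_period q hq (fun n => sawtooth (z + n / q)) (by
    intro n
    show sawtooth _ = sawtooth _
    have : z + ((n + q : ℤ):ℝ) / q = z + n / q + ((1:ℤ):ℝ) := by
      push_cast; field_simp; ring
    rw [this, saw_add_int]) p ⌊q * y⌋ hc
  have : ∑ c ∈ range q, sawtooth (y + c * (p / q)) = ∑ c ∈ range q, sawtooth (z + c / q) := by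
    simp only [Int.cast_natCast] at key
    rw [← key]
    refine Finset.sum_congr rfl fun c _ => ?_
    congr 1
    conv_lhs => rw [hy]
    push_cast; field_simp; ring
  rw [this]
  apply saw_dist1 q hq
  · rw [hz]; have := Int.fract_nonneg (q*y); positivity
  · rw [hz]; exact div_lt_div_of_pos_right (Int.fract_lt_one _) hq'

lemma block_bound (p : ℤ) (q : ℕ) (hq : 0 < q) (hc : IsCoprime p (q:ℤ)) (x y ε : ℝ)
    (hx : ∀ c < q, |(c:ℝ) * x - c * (p / q)| ≤ ε) :
    |∑ c ∈ range q, sawtooth (y + c * x)| ≤ 1 / 2 + 2 * (q * ε) := by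
  have b1 := abs_le.1 (saw_dist p q hq hc (y + ε))
  have b2 := abs_le.1 (saw_dist p q hq hc (y - ε))
  have u : ∑ c ∈ range q, sawtooth (y + c * x) ≤
      ∑ c ∈ range q, (sawtooth (y + ε + c * (p/q)) + 2 * ε) := by
    refine Finset.sum_le_sum fun c hc => ?_
    have := abs_le.1 (hx c (Finset.mem_range.1 hc))
    have := saw_mono (y := y + c * x) (z := y + ε + c * (p/q)) (by linarith)
    linarith
  have l : ∑ c ∈ range q, (sawtooth (y - ε + c * (p/q)) - 2 * ε) ≤ ∑ c ∈ range q, sawtooth (y + c * x) := by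
    refine Finset.sum_le_sum fun c hc => ?_
    have := abs_le.1 (hx c (Finset.mem_range.1 hc))
    have := saw_mono (z := y + c * x) (y := y - ε + c * (p/q)) (by linarith)
    linarith
  rw [Finset.sum_add_distrib] at u
  rw [Finset.sum_sub_distrib] at l
  simp only [Finset.sum_const, Finset.card_range, nsmul_eq_mul] at u l
  rw [abs_le]
  constructor <;> linarith

lemma abel_bound (a w : ℕ → ℝ) (E κ : ℝ) (hw : Antitone w) (hw0 : ∀ i, 0 ≤ w i)
    (T : ℕ) (hP : ∀ t ≤ T, |∑ i ∈ range t, a i| ≤ E + κ * t) :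
    |∑ i ∈ range T, a i * w i| ≤ E * w 0 + κ * ∑ i ∈ range T, w i := by
  have key : ∀ t ≤ T, |∑ i ∈ range t, a i * w i - (∑ i ∈ range t, a i) * w t| ≤
      E * w 0 + κ * ∑ i ∈ range t, w i - (E + κ * t) * w t := by
    intro t
    induction t with
    | zero => intro _; simp
    | succ t ih =>
      intro ht
      have i1 := abs_le.1 (ih (by omega))
      have i2 := abs_le.1 (hP (t+1) ht)
      have d : 0 ≤ w t - w (t+1) := by linarith [hw (Nat.le_succ t)]
      simp only [Finset.sum_range_succ] at i2 ⊢
      have j1 := mul_le_mul_of_nonneg_right i2.1 d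
      have j2 := mul_le_mul_of_nonneg_right i2.2 d
      push_cast at j1 j2 ⊢
      rw [abs_le]
      constructor <;> nlinarith
  have k1 := abs_le.1 (key T le_rfl)
  have k2 := abs_le.1 (hP T le_rfl)
  have j1 := mul_le_mul_of_nonneg_right k2.1 (hw0 T)
  have j2 := mul_le_mul_of_nonneg_right k2.2 (hw0 T)
  rw [abs_le]
  constructor <;> nlinarith

/-- partial sums by blocks -/
lemma partial_bound (s : ℕ → ℝ) (q : ℕ) (hq : 0 < q) (E κ : ℝ) (hκ : 0 ≤ κ)
    (h1 : ∀ N, |∑ c ∈ range q, s (N + c)| ≤ κ)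
    (h2 : ∀ N, ∀ t < q, |∑ c ∈ range t, s (N + c)| ≤ E) (N t : ℕ) :
    |∑ c ∈ range t, s (N + c)| ≤ E + κ / q * t := by
  have hq' : (0:ℝ) < q := by exact_mod_cast hq
  induction t using Nat.strong_induction_on generalizing N with
  | _ t ih =>
    by_cases ht : t < q
    · have := h2 N t ht
      have : 0 ≤ κ / q * t := by positivity
      linarith
    · obtain ⟨u, rfl⟩ : ∃ u, t = q + u := ⟨t - q, by omega⟩
      rw [Finset.sum_range_add]
      have a1 := h1 N
      have a2 := ih u (by omega) (N + q)
      have e : ∑ c ∈ range u, s (N + (q + c)) = ∑ c ∈ range u, s (N + q + c) := by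
        simp only [add_assoc]
      rw [e]
      refine (abs_add_le _ _).trans ?_
      have : κ / q * ((q + u : ℕ):ℝ) = κ + κ / q * u := by push_cast; field_simp
      rw [this]; linarith

lemma harm_bound (q : ℕ) (hq : 0 < q) (T : ℕ) :
    ∑ i ∈ range T, (1:ℝ) / ((q + i : ℕ):ℝ) ≤ 1 / q - 1 / ((q + T : ℕ):ℝ) + Real.log (((q + T : ℕ):ℝ) / q) := by
  have hq' : (0:ℝ) < q := by exact_mod_cast hq
  induction T with
  | zero => simp [hq'.ne']
  | succ T ih =>
    rw [Finset.sum_range_succ]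
    set n : ℝ := ((q + T : ℕ):ℝ) with hn
    have hn0 : 0 < n := by rw [hn]; positivity
    have e : ((q + (T + 1) : ℕ):ℝ) = n + 1 := by rw [hn]; push_cast; ring
    rw [e]
    have : Real.log ((n+1)/q) = Real.log (n/q) + Real.log ((n+1)/n) := by
      rw [← Real.log_mul (by positivity) (by positivity)]; congr 1; field_simp
    have h3 : 1 / (n+1) ≤ Real.log ((n+1)/n) := by
      have := Real.one_sub_inv_le_log_of_pos (x := (n+1)/n) (by positivity)
      refine le_trans (le_of_eq ?_) this
      field_simp; ring
    rw [this]; linarith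

lemma rec_sum (a e : ℕ → ℝ) (ha : ∀ i, 0 ≤ a i) (he : ∀ i, 0 ≤ e i) (n : ℕ)
    (h : ∀ j, j + 2 < n → a (j+2) ≤ a j / 2 + e j) :
    ∑ j ∈ range n, a j ≤ 2 * (a 0 + a 1 + ∑ j ∈ range n, e j) := by
  match n with
  | 0 => simp; linarith [ha 0, ha 1]
  | 1 => simp; linarith [ha 0, ha 1, he 0]
  | n + 2 =>
    have h1 : ∑ j ∈ range n, a (j+2) ≤ ∑ j ∈ range n, (a j / 2 + e j) :=
      Finset.sum_le_sum fun j hj => h j (by have := Finset.mem_range.1 hj; omega)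
    rw [Finset.sum_add_distrib, ← Finset.sum_div] at h1
    have h2 : ∑ j ∈ range (n+2), a j = ∑ j ∈ range n, a (j+2) + a 1 + a 0 := by
      rw [Finset.sum_range_succ', Finset.sum_range_succ']
    have h3 : ∑ j ∈ range n, a j ≤ ∑ j ∈ range (n+2), a j :=
      Finset.sum_le_sum_of_subset_of_nonneg (by intro i; simp; omega) (fun i _ _ => ha i)
    have h4 : ∑ j ∈ range n, e j ≤ ∑ j ∈ range (n+2), e j :=
      Finset.sum_le_sum_of_subset_of_nonneg (by intro i; simp; omega) (fun i _ _ => he i)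
    linarith
lemma cot_sum (k : ℕ) (a : ℕ) (ha : 0 < a) (hak : a < k) :
    2 * ∑ c ∈ range k, sawtooth ((c:ℝ) / k) * Real.sin (2 * π * a * c / k) = Real.cot (π * a / k) := by
  have hk : (0:ℝ) < k := by exact_mod_cast (by omega : 0 < k)
  set θ : ℝ := π * a / k with hθ
  have hθ0 : 0 < θ := by have := Real.pi_pos; positivity
  have hθ1 : θ < π := by
    rw [hθ, div_lt_iff₀ hk]
    have : (a:ℝ) < k := by exact_mod_cast hak
    exact mul_lt_mul_of_pos_left this Real.pi_pos
  have hs : 0 < Real.sin θ := Real.sin_pos_of_pos_of_lt_pi hθ0 hθ1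
  -- telescoping
  have t1 : ∀ n : ℕ, 2 * Real.sin θ * ∑ c ∈ range n, Real.sin (2 * θ * c) =
      Real.cos θ - Real.cos (2 * θ * n - θ) := by
    intro n
    induction n with
    | zero => simp
    | succ n ih =>
      rw [Finset.sum_range_succ, mul_add, ih]
      have e : 2 * θ * ((n + 1 : ℕ):ℝ) - θ = 2 * θ * n + θ := by push_cast; ring
      rw [e, Real.cos_add, Real.cos_sub]; ring
  have t2 : ∀ n : ℕ, 2 * Real.sin θ * ∑ c ∈ range n, Real.cos (2 * θ * c + θ) = Real.sin (2 * θ * n) := by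
    intro n
    induction n with
    | zero => simp
    | succ n ih =>
      rw [Finset.sum_range_succ, mul_add, ih]
      have e : 2 * θ * ((n + 1 : ℕ):ℝ) = (2 * θ * n + θ) + θ := by push_cast; ring
      have e' : 2 * θ * (n:ℝ) = (2 * θ * n + θ) - θ := by ring
      rw [e, Real.sin_add]
      conv_lhs => enter [1]; rw [e']
      rw [Real.sin_sub]; ring
  have t3 : ∀ n : ℕ, 2 * Real.sin θ * ∑ c ∈ range n, (c:ℝ) * Real.sin (2 * θ * c) =
      - n * Real.cos (2 * θ * n - θ) + ∑ c ∈ range n, Real.cos (2 * θ * c + θ) := by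
    intro n
    induction n with
    | zero => simp
    | succ n ih =>
      rw [Finset.sum_range_succ, mul_add, ih, Finset.sum_range_succ]
      have e : 2 * θ * ((n + 1 : ℕ):ℝ) - θ = 2 * θ * n + θ := by push_cast; ring
      rw [e, Real.cos_add, Real.cos_sub]; push_cast; ring
  have hk2 : 2 * θ * k = (a:ℝ) * (2 * π) := by rw [hθ]; field_simp
  have c1 : Real.cos (2 * θ * k - θ) = Real.cos θ := by
    rw [hk2, ← Real.cos_neg, neg_sub]
    exact Real.cos_sub_nat_mul_two_pi θ a
  have s1 : Real.sin (2 * θ * k) = 0 := by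
    rw [hk2]; have := Real.sin_nat_mul_pi (2 * a); push_cast at this
    rw [← this]; congr 1; ring
  have a1 := t1 k
  have a2 := t2 k
  have a3 := t3 k
  rw [c1] at a1 a3
  rw [s1] at a2
  have z1 : ∑ c ∈ range k, Real.sin (2 * θ * c) = 0 := by
    have : 2 * Real.sin θ * ∑ c ∈ range k, Real.sin (2 * θ * c) = 0 := by linarith
    rcases mul_eq_zero.1 this with h | h
    · linarith
    · exact h
  have z2 : ∑ c ∈ range k, Real.cos (2 * θ * c + θ) = 0 := by
    rcases mul_eq_zero.1 a2 with h | h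
    · linarith
    · exact h
  rw [z2] at a3
  have : ∑ c ∈ range k, sawtooth ((c:ℝ) / k) * Real.sin (2 * π * a * c / k) =
      ∑ c ∈ range k, (1/2 * Real.sin (2 * θ * c) - 1/k * (c * Real.sin (2 * θ * c))) := by
    refine Finset.sum_congr rfl fun c hc => ?_
    have e : 2 * π * a * c / k = 2 * θ * c := by rw [hθ]; ring
    rw [e]
    rcases Nat.eq_zero_or_pos c with rfl | hc0
    · simp
    have hcr : (0:ℝ) < c := by exact_mod_cast hc0
    have hf : Int.fract ((c:ℝ)/k) = (c:ℝ)/k := by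
      rw [Int.fract_eq_self]
      exact ⟨by positivity, by rw [div_lt_one hk]; exact_mod_cast Finset.mem_range.1 hc⟩
    unfold sawtooth
    rw [hf, if_neg (by positivity)]; ring
  rw [this, Finset.sum_sub_distrib, ← Finset.mul_sum, ← Finset.mul_sum, z1, Real.cot_eq_cos_div_sin]
  rw [eq_div_iff hs.ne']
  generalize ∑ c ∈ range k, (c:ℝ) * Real.sin (2 * θ * c) = S at a3 ⊢
  field_simp
  linarith

lemma cot_lim (x : ℝ) (h0 : 0 < x) (h1 : x < 1) :
    Tendsto (fun n : ℕ => ∑ i ∈ range n, (1 / (i + x) - 1 / (i + 1 - x))) atTop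
      (nhds (π * Real.cot (π * x))) := by
  have hx : (x : ℂ) ∈ Complex.integerComplement := by
    rintro ⟨n, hn⟩
    have hn' : (n : ℝ) = x := by exact_mod_cast hn
    rw [← hn'] at h0 h1
    have h0' : 0 < n := by exact_mod_cast h0
    have h1' : n < 1 := by exact_mod_cast h1
    omega
  have T := tendsto_logDeriv_euler_cot_sub hx
  have T2 := (Complex.continuous_re.tendsto _).comp T
  have e : (((π:ℂ) * ((π:ℂ) * (x:ℂ)).cot - 1 / (x:ℂ))).re = π * Real.cot (π * x) - 1 / x := by
    rw [← Complex.ofReal_mul, ← Complex.ofReal_cot, ← Complex.ofReal_mul]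
    rw [← Complex.ofReal_one, ← Complex.ofReal_div, ← Complex.ofReal_sub, Complex.ofReal_re]
  rw [e] at T2
  have T3 : Tendsto (fun n : ℕ => 1 / x - 1 / ((n:ℝ) + x)) atTop (nhds (1/x - 0)) := by
    refine tendsto_const_nhds.sub ?_
    simp only [one_div]
    exact (tendsto_atTop_add_const_right _ _ tendsto_natCast_atTop_atTop).inv_tendsto_atTop
  have T4 := T2.add T3
  refine (T4.congr ?_).trans (by rw [show π * Real.cot (π * x) - 1 / x + (1 / x - 0) = π * Real.cot (π * x) by ring])
  intro n
  have hre : ∀ j : ℕ, cotTerm (x:ℂ) j = ((1 / (x - (j + 1)) + 1 / (x + (j + 1)) : ℝ) : ℂ) := by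
    intro j; simp [cotTerm]
  simp only [Function.comp]
  rw [Finset.sum_congr rfl fun j _ => hre j, ← Complex.ofReal_sum, Complex.ofReal_re]
  induction n with
  | zero => simp
  | succ n ih =>
    rw [Finset.sum_range_succ, Finset.sum_range_succ, ← ih]
    push_cast
    have : (x - ((n:ℝ) + 1)) = - (n + 1 - x) := by ring
    rw [this, one_div (-_), inv_neg]
    rw [show (n:ℝ) + 1 + x = x + (n + 1) by ring]
    simp only [one_div]
    ring

lemma sum_range_mul (f : ℕ → ℝ) (k n : ℕ) :
    ∑ m ∈ range (n * k), f m = ∑ i ∈ range n, ∑ a ∈ range k, f (i * k + a) := by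
  induction n with
  | zero => simp
  | succ n ih => rw [Finset.sum_range_succ, ← ih, Nat.succ_mul, Finset.sum_range_add]

/-- series of an odd periodic function -/
lemma odd_series (k : ℕ) (hk : 0 < k) (F : ℤ → ℝ) (hF : ∀ n, F (n + k) = F n)
    (hodd : ∀ n, F (-n) = - F n) :
    Tendsto (fun n : ℕ => ∑ m ∈ range (n * k), F m / m) atTop
      (nhds (π / (2 * k) * ∑ a ∈ range k, F a *
        (2 * ∑ c ∈ range k, sawtooth ((c:ℝ) / k) * Real.sin (2 * π * a * c / k)))) := by
  have hk' : (0:ℝ) < k := by exact_mod_cast hk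
  have F0 : F 0 = 0 := by have := hodd 0; simp at this; linarith
  have hper : Function.Periodic F (k : ℤ) := hF
  have e : ∀ n : ℕ, ∑ m ∈ range (n * k), F m / m =
      ∑ a ∈ range k, F a / (2 * k) * ∑ i ∈ range n, (1 / (i + (a:ℝ)/k) - 1 / (i + 1 - (a:ℝ)/k)) := by
    intro n
    rw [sum_range_mul]
    simp only [Finset.mul_sum]
    rw [Finset.sum_comm (s := range k)]
    refine Finset.sum_congr rfl fun i _ => ?_
    have p : ∀ a : ℕ, F ((i * k + a : ℕ)) = F a := by
      intro a
      have := hper.nat_mul i (a : ℤ)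
      rw [← this]; push_cast; ring_nf
    simp only [p]
    obtain ⟨l, rfl⟩ : ∃ l, k = l + 1 := ⟨k - 1, by omega⟩
    rw [Finset.sum_range_succ', Finset.sum_range_succ' _ l]
    simp only [Nat.cast_zero, F0, zero_div, zero_mul, add_zero]
    set g : ℕ → ℝ := fun a => F ((a+1:ℕ)) / ((i * (l+1) + (a+1) : ℕ):ℝ) with hg
    have r1 : ∑ a ∈ range l, g a = ∑ a ∈ range l, (g a / 2 + g (l - 1 - a) / 2) := by
      rw [Finset.sum_add_distrib, ← Finset.sum_div, ← Finset.sum_div,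
        Finset.sum_range_reflect]; ring
    rw [r1]
    refine Finset.sum_congr rfl fun a ha => ?_
    have ha := Finset.mem_range.1 ha
    simp only [hg]
    have q1 : F ((l - 1 - a + 1 : ℕ)) = - F ((a + 1 : ℕ)) := by
      rw [← hodd, ← hF (-_)]; congr 1; push_cast; omega
    rw [q1]
    have q2 : ((i * (l+1) + (l - 1 - a + 1) : ℕ):ℝ) = i * (l+1) + (l - a) := by
      have : l - 1 - a + 1 = l - a := by omega
      rw [this]; push_cast [Nat.cast_sub ha.le]; ring
    rw [q2]
    have hal : (a:ℝ) + 1 ≤ l := by exact_mod_cast ha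
    have d1 : (i:ℝ) * (l+1) + (l - a) ≠ 0 := by
      have : (0:ℝ) ≤ (i:ℝ) * (l+1) := by positivity
      intro h; linarith
    have d3 : (i:ℝ) * (l+1) + (a+1) ≠ 0 := by positivity
    push_cast
    have d2 : (i:ℝ) + 1 - ((a:ℝ)+1)/(l+1) = ((i:ℝ) * (l+1) + (l - a)) / (l+1) := by
      field_simp; ring
    have d4 : (i:ℝ) + ((a:ℝ)+1)/(l+1) = ((i:ℝ) * (l+1) + (a+1)) / (l+1) := by
      field_simp
    rw [d2, d4]
    field_simp
    ring
  simp_rw [e]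
  rw [Finset.mul_sum]
  refine tendsto_finsetSum _ fun a ha => ?_
  rcases Nat.eq_zero_or_pos a with rfl | ha0
  · simp [F0]
  have ha := Finset.mem_range.1 ha
  rw [cot_sum k a ha0 ha]
  have h0 : (0:ℝ) < (a:ℝ)/k := by have : (0:ℝ) < a := by exact_mod_cast ha0
                                  positivity
  have h1 : (a:ℝ)/k < 1 := by rw [div_lt_one hk']; exact_mod_cast ha
  have := (cot_lim _ h0 h1).const_mul (F a / (2 * k))
  refine this.trans (le_of_eq ?_)
  congr 1
  rw [mul_div_assoc π (a:ℝ)]; ring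

lemma duality (h k : ℕ) (hk : 0 < k) (hc : Nat.Coprime h k) (j : ℤ) :
    ∑ a ∈ range k, (2 * Real.cos (2 * π * a * (j / k)) * sawtooth (a * (h / k))) *
        (2 * ∑ c ∈ range k, sawtooth ((c:ℝ) / k) * Real.sin (2 * π * a * c / k)) =
    ∑ a ∈ range k, (sawtooth (a * (h / k) + j / k) + sawtooth (a * (h / k) - j / k)) *
        (2 * ∑ c ∈ range k, sawtooth ((c:ℝ) / k) * Real.sin (2 * π * a * c / k)) := by
  have hk' : (0:ℝ) < k := by exact_mod_cast hk
  have hci : IsCoprime (h:ℤ) (k:ℤ) := Nat.isCoprime_iff_coprime.2 hc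
  have sinper : ∀ (t : ℝ) (n : ℤ), Real.sin (t + n * (2 * π)) = Real.sin t :=
    fun t n => Real.sin_add_int_mul_two_pi t n
  have sawper : ∀ n : ℤ, sawtooth (((n + k : ℤ):ℝ) / k) = sawtooth ((n:ℝ)/k) := by
    intro n
    have : ((n + k : ℤ):ℝ) / k = (n:ℝ)/k + ((1:ℤ):ℝ) := by push_cast; field_simp
    rw [this, saw_add_int]
  -- inner substitution c -> h c
  have inner : ∀ b : ℕ, ∑ c ∈ range k, sawtooth ((c:ℝ) / k) * Real.sin (2 * π * b * c / k) =
      ∑ a ∈ range k, sawtooth ((a:ℝ) * (h / k)) * Real.sin (2 * π * b * (h * a) / k) := by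
    intro b
    have := sum_period k hk (fun n => sawtooth ((n:ℝ)/k) * Real.sin (2 * π * b * n / k)) (by
      intro n
      show _ * _ = _ * _
      rw [sawper]
      congr 1
      have : 2 * π * b * ((n + k : ℤ):ℝ) / k = 2 * π * b * n / k + ((b:ℤ):ℝ) * (2 * π) := by
        push_cast; field_simp
      rw [this, sinper]) h 0 hci
    simp only [Int.cast_natCast] at this
    rw [← this]
    refine Finset.sum_congr rfl fun a _ => ?_
    push_cast
    rw [add_zero]
    congr 2
    ring
  have outer : ∀ (i : ℤ) (a : ℕ), ∑ b ∈ range k, sawtooth ((b:ℝ) * (h / k) + i / k) * Real.sin (2 * π * b * (h * a) / k) =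
      ∑ c ∈ range k, sawtooth ((c:ℝ)/k) * Real.sin (2 * π * a * c / k - 2 * π * a * (i / k)) := by
    intro i a
    have := sum_period k hk (fun n => sawtooth ((n:ℝ)/k) * Real.sin (2 * π * a * n / k - 2 * π * a * (i / k))) (by
      intro n
      show _ * _ = _ * _
      rw [sawper]
      congr 1
      have : 2 * π * a * ((n + k : ℤ):ℝ) / k - 2 * π * a * (i / k) = 2 * π * a * n / k - 2 * π * a * (i / k) + ((a:ℤ):ℝ) * (2 * π) := by
        push_cast; field_simp; ring
      rw [this, sinper]) h i hci
    simp only [Int.cast_natCast] at this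
    rw [← this]
    refine Finset.sum_congr rfl fun b _ => ?_
    push_cast
    congr 2
    · ring
    · ring
  have R : ∀ i : ℤ, ∑ b ∈ range k, sawtooth ((b:ℝ) * (h / k) + i / k) *
        (2 * ∑ c ∈ range k, sawtooth ((c:ℝ) / k) * Real.sin (2 * π * b * c / k)) =
      ∑ a ∈ range k, 2 * sawtooth ((a:ℝ) * (h / k)) * ∑ c ∈ range k, sawtooth ((c:ℝ)/k) * Real.sin (2 * π * a * c / k - 2 * π * a * (i / k)) := by
    intro i
    simp_rw [inner]
    simp only [← outer]
    simp only [Finset.mul_sum]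
    rw [Finset.sum_comm]
    refine Finset.sum_congr rfl fun a _ => Finset.sum_congr rfl fun b _ => ?_
    ring
  simp only [add_mul, Finset.sum_add_distrib]
  have R2 := R (-j)
  have en : ∀ b : ℕ, sawtooth ((b:ℝ) * (h / k) + ((-j : ℤ):ℝ) / k) = sawtooth ((b:ℝ) * (h/k) - j / k) := by
    intro b; congr 1; push_cast; ring
  simp only [en] at R2
  rw [R j, R2, ← Finset.sum_add_distrib]
  refine Finset.sum_congr rfl fun a _ => ?_
  rw [← mul_add, ← Finset.sum_add_distrib]
  simp only [Finset.mul_sum]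
  refine Finset.sum_congr rfl fun c _ => ?_
  have : 2 * π * a * c / k - 2 * π * a * (((-j:ℤ):ℝ) / k) = 2 * π * a * c / k + 2 * π * a * (j / k) := by
    push_cast; ring
  rw [this, Real.sin_add, Real.sin_sub]
  ring
noncomputable def Efun (v : ℕ → ℕ) : ℕ → ℝ
  | 0 => 1 / 2
  | j + 1 => Efun v j + 5 / 2 * ((v (j+1) : ℝ) / v j)

lemma Efun_nonneg (v : ℕ → ℕ) (j : ℕ) : 0 ≤ Efun v j := by
  induction j with
  | zero => simp [Efun]
  | succ j ih => simp only [Efun]; positivity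

lemma level_bound (s : ℕ → ℝ) (v : ℕ → ℕ) (r : ℕ) (hs : ∀ m, |s m| ≤ 1 / 2)
    (v0 : v 0 = 1) (vpos : ∀ m ≤ r, 1 ≤ v m) (vmono : ∀ m < r, v m ≤ v (m+1))
    (hb : ∀ j < r, ∀ N, |∑ c ∈ range (v j), s (N + c)| ≤ 1/2 + 2 * ((v j : ℝ) / v (j+1))) :
    |∑ m ∈ Ico 1 (v r), s m / m| ≤
      ∑ j ∈ range r, (1/2 * (Real.log ((v (j+1):ℝ) / v j) / v j) + 9/2 * (1 / (v j:ℝ)) + Efun v j / v j) := by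
  have hpos : ∀ m ≤ r, (0:ℝ) < v m := fun m hm => by exact_mod_cast vpos m hm
  have hrat : ∀ j < r, (v j : ℝ) / v (j+1) ≤ 1 := fun j hj => by
    rw [div_le_one (hpos (j+1) hj)]; exact_mod_cast vmono j hj
  have PB : ∀ j ≤ r, ∀ N, ∀ t ≤ v j, |∑ c ∈ range t, s (N + c)| ≤ Efun v j := by
    intro j
    induction j with
    | zero =>
      intro _ N t ht
      rw [v0] at ht
      interval_cases t
      · simp [Efun]
      · simpa [Efun] using hs N
    | succ j ih =>
      intro hj N t ht
      have hq := hpos j (by omega)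
      have hq2 := hpos (j+1) hj
      have hrt := hrat j hj
      have hκ : 0 ≤ 1/2 + 2 * ((v j : ℝ) / v (j+1)) := by positivity
      have := partial_bound s (v j) (vpos j (by omega)) (Efun v j) _ hκ (hb j hj)
        (fun N t ht => ih (by omega) N t ht.le) N t
      refine this.trans ?_
      simp only [Efun]
      have ht' : (t:ℝ) ≤ v (j+1) := by exact_mod_cast ht
      have : (1/2 + 2 * ((v j : ℝ) / v (j+1))) / v j * t ≤ (5/2) / v j * v (j+1) := by
        gcongr; linarith
      have e : (5/2) / (v j:ℝ) * v (j+1) = 5 / 2 * ((v (j+1) : ℝ) / v j) := by ring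
      linarith
  have LB : ∀ j < r, |∑ m ∈ Ico (v j) (v (j+1)), s m / m| ≤
      1/2 * (Real.log ((v (j+1):ℝ) / v j) / v j) + 9/2 * (1 / (v j:ℝ)) + Efun v j / v j := by
    intro j hj
    have hq := hpos j hj.le
    have hq2 := hpos (j+1) hj
    have hrt := hrat j hj
    set κ := 1/2 + 2 * ((v j : ℝ) / v (j+1)) with hκd
    have hκ : 0 ≤ κ := by positivity
    rw [Finset.sum_Ico_eq_sum_range]
    have A := abel_bound (fun i => s (v j + i)) (fun i => 1 / ((v j + i : ℕ):ℝ)) (Efun v j) (κ / v j)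
      (by
        intro a b hab
        show 1 / ((v j + b : ℕ):ℝ) ≤ 1 / ((v j + a : ℕ):ℝ)
        apply one_div_le_one_div_of_le
        · push_cast; positivity
        · exact_mod_cast (by omega))
      (fun i => by positivity) (v (j+1) - v j)
      (fun t _ => partial_bound s (v j) (vpos j hj.le) (Efun v j) κ hκ (hb j hj)
        (fun N t ht => PB j hj.le N t ht.le) (v j) t)
    have H := harm_bound (v j) (vpos j hj.le) (v (j+1) - v j)
    rw [Nat.add_sub_cancel' (vmono j hj)] at H
    set L := Real.log ((v (j+1):ℝ) / v j) with hL
    have hL2 : L ≤ (v (j+1):ℝ) / v j := (Real.log_le_sub_one_of_pos (by positivity)).trans (by linarith)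
    have hv1 : (1:ℝ) ≤ v j := by exact_mod_cast vpos j hj.le
    have H' : ∑ i ∈ range (v (j+1) - v j), (1:ℝ) / ((v j + i : ℕ):ℝ) ≤ 1 + L := by
      have : (0:ℝ) ≤ 1 / v (j+1) := by positivity
      have : 1 / (v j:ℝ) ≤ 1 := by rw [div_le_one hq]; exact hv1
      linarith
    have e0 : ∀ i, s (v j + i) / ((v j + i : ℕ):ℝ) = s (v j + i) * (1 / ((v j + i : ℕ):ℝ)) := by
      intro i; ring
    simp only [e0]
    refine A.trans ?_
    have m1 := mul_le_mul_of_nonneg_left H' (show 0 ≤ κ / v j by positivity)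
    have e1 : Efun v j * (1 / ((v j + 0 : ℕ):ℝ)) = Efun v j / v j := by rw [add_zero]; ring
    rw [e1]
    have m2 : κ / v j * (1 + L) ≤ 1/2 * (L / v j) + 9/2 * (1 / (v j:ℝ)) := by
      have k1 : κ ≤ 5/2 := by linarith
      have k2 : (v j:ℝ) / v (j+1) * L ≤ 1 := by
        calc (v j:ℝ) / v (j+1) * L ≤ (v j:ℝ) / v (j+1) * ((v (j+1):ℝ) / v j) := by gcongr
          _ = 1 := by field_simp
      have : κ * (1 + L) ≤ 1/2 * L + 9/2 := by
        have : κ * L = 1/2 * L + 2 * ((v j:ℝ) / v (j+1) * L) := by rw [hκd]; ring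
        linarith
      calc κ / v j * (1 + L) = (κ * (1 + L)) / v j := by ring
        _ ≤ (1/2 * L + 9/2) / v j := by gcongr
        _ = _ := by ring
    linarith
  have fin : ∀ n ≤ r, 1 ≤ v n ∧ |∑ m ∈ Ico 1 (v n), s m / m| ≤
      ∑ j ∈ range n, (1/2 * (Real.log ((v (j+1):ℝ) / v j) / v j) + 9/2 * (1 / (v j:ℝ)) + Efun v j / v j) := by
    intro n
    induction n with
    | zero => intro _; simp [v0]
    | succ n ih =>
      intro hn
      refine ⟨vpos _ hn, ?_⟩
      rw [Finset.sum_range_succ, ← Finset.sum_Ico_consecutive _ (vpos n (by omega)) (vmono n hn)]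
      exact (abs_add_le _ _).trans (add_le_add (ih (by omega)).2 (LB n hn))
  exact (fin r le_rfl).2

lemma sum_bounds (v : ℕ → ℕ) (r : ℕ) (v0 : v 0 = 1) (vpos : ∀ m ≤ r, 1 ≤ v m)
    (v2 : ∀ m, m + 2 ≤ r → 2 * v m ≤ v (m+2)) (vmono' : ∀ j, j + 2 < r → v (j+1) ≤ v (j+2)) (hr : 1 ≤ r) :
    ∑ j ∈ range r, (9/2 * (1 / (v j:ℝ)) + Efun v j / v j) ≤ 65 := by
  have hpos : ∀ m ≤ r, (0:ℝ) < v m := fun m hm => by exact_mod_cast vpos m hm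
  have h1 : (1:ℝ) ≤ v 1 := by exact_mod_cast vpos 1 hr
  have S1 : ∑ j ∈ range (r+1), 1 / (v j:ℝ) ≤ 4 := by
    have := rec_sum (fun j => 1 / (v j:ℝ)) (fun _ => 0) (fun i => by positivity) (fun _ => le_rfl) (r+1)
      (by
        intro j hj
        have a := hpos j (by omega)
        have b : (2:ℝ) * v j ≤ v (j+2) := by exact_mod_cast v2 j (by omega)
        show 1 / (v (j+2):ℝ) ≤ 1 / (v j:ℝ) / 2 + 0
        rw [add_zero, div_div]
        exact one_div_le_one_div_of_le (by positivity) (by linarith))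
    refine this.trans ?_
    simp only [v0, Finset.sum_const_zero]
    have : 1 / (v 1:ℝ) ≤ 1 := by rw [div_le_one (by linarith)]; exact h1
    push_cast; linarith
  have S1' : ∑ j ∈ range r, 1 / (v j:ℝ) ≤ 4 := by
    rw [Finset.sum_range_succ] at S1
    have : 0 ≤ 1 / (v r:ℝ) := by positivity
    linarith
  have S1'' : ∑ j ∈ range r, 1 / (v (j+1):ℝ) ≤ 4 := by
    rw [Finset.sum_range_succ'] at S1
    have : 0 ≤ 1 / (v 0:ℝ) := by positivity
    linarith
  have S2 := rec_sum (fun j => Efun v j / v j) (fun j => 5/2 * (1 / (v j:ℝ) + 1 / (v (j+1):ℝ)))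
      (fun i => by have := Efun_nonneg v i; positivity) (fun i => by positivity) r
      (by
        intro j hj
        have a := hpos j (by omega)
        have a1 := hpos (j+1) (by omega)
        have a2 := hpos (j+2) (by omega)
        have b : (2:ℝ) * v j ≤ v (j+2) := by exact_mod_cast v2 j (by omega)
        have hE := Efun_nonneg v j
        show Efun v (j+2) / (v (j+2):ℝ) ≤ Efun v j / (v j:ℝ) / 2 + 5/2 * (1 / (v j:ℝ) + 1 / (v (j+1):ℝ))
        simp only [Efun]
        have c1 : Efun v j / v (j+2) ≤ Efun v j / (v j) / 2 := by
          rw [div_div]; gcongr; linarith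
        have c2 : (v (j+1):ℝ) / v j / v (j+2) ≤ 1 / v j := by
          rw [div_right_comm]
          gcongr
          rw [div_le_one a2]
          have : v (j+1) ≤ v (j+2) := vmono' j hj
          exact_mod_cast this
        have c3 : (v (j+2):ℝ) / v (j+1) / v (j+2) = 1 / v (j+1) := by field_simp
        have : (Efun v j + 5 / 2 * ((v (j+1):ℝ) / v j) + 5 / 2 * ((v (j+2):ℝ) / v (j+1))) / v (j+2) =
          Efun v j / v (j+2) + 5/2 * ((v (j+1):ℝ) / v j / v (j+2)) + 5/2 * ((v (j+2):ℝ) / v (j+1) / v (j+2)) := by ring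
        rw [show j + 1 + 1 = j + 2 from rfl, this, c3]
        linarith)
  rw [← Finset.mul_sum, Finset.sum_add_distrib] at S2
  have T0 : Efun v 0 / v 0 = 1/2 := by simp [Efun, v0]
  have T1 : Efun v 1 / v 1 ≤ 3 := by
    rw [div_le_iff₀ (by linarith)]; simp [Efun, v0]; linarith
  rw [Finset.sum_add_distrib, ← Finset.mul_sum]
  linarith

lemma cf_bound (h k : ℕ) (hh : 1 ≤ h) (hk : h < k)
    (r : ℕ) (b u v : ℕ → ℕ)
    (hb : ∀ m, 1 ≤ m → m ≤ r → 1 ≤ b m)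
    (v0 : v 0 = 1) (u0 : u 0 = 0)
    (v1 : 1 ≤ r → v 1 = b 1) (u1 : 1 ≤ r → u 1 = 1)
    (hv : ∀ m, 2 ≤ m → m ≤ r → v m = b m * v (m - 1) + v (m - 2))
    (hu : ∀ m, 2 ≤ m → m ≤ r → u m = b m * u (m - 1) + u (m - 2))
    (vr : v r = k) (ur : u r = h) (α : ℝ) :
    |∑ m ∈ Ico 1 k, sawtooth (m * ((h:ℝ) / k) + α) / m| ≤
      1/2 * (∑ j ∈ range r, Real.log ((v (j+1):ℝ) / v j) / v j) + 65 := by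
  have hr : 1 ≤ r := by
    by_contra hr
    have : r = 0 := by omega
    subst this; omega
  have hv' : ∀ m, m + 2 ≤ r → v (m+2) = b (m+2) * v (m+1) + v m := fun m hm => hv (m+2) (by omega) hm
  have hu' : ∀ m, m + 2 ≤ r → u (m+2) = b (m+2) * u (m+1) + u m := fun m hm => hu (m+2) (by omega) hm
  have vpos : ∀ m ≤ r, 1 ≤ v m := by
    intro m
    induction m using Nat.strong_induction_on with
    | _ m ih =>
      intro hm
      match m with
      | 0 => omega
      | 1 => rw [v1 hr]; exact hb 1 le_rfl hr
      | m + 2 => rw [hv' m hm]; have := ih m (by omega) (by omega); omega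
  have vmono : ∀ m < r, v m ≤ v (m+1) := by
    intro m hm
    match m with
    | 0 => rw [v0]; exact vpos 1 hr
    | m + 1 =>
      rw [hv' m hm]
      have := hb (m+2) (by omega) hm
      nlinarith
  have v2 : ∀ m, m + 2 ≤ r → 2 * v m ≤ v (m+2) := by
    intro m hm
    rw [hv' m hm]
    have := hb (m+2) (by omega) hm
    have := vmono m (by omega)
    nlinarith
  have det : ∀ m < r, (u (m+1):ℤ) * v m - u m * v (m+1) = (-1)^m := by
    intro m
    induction m with
    | zero => intro _; simp [u0, v0, u1 hr]
    | succ m ih =>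
      intro hm
      have := ih (by omega)
      rw [show m + 1 + 1 = m + 2 from rfl, hv' m hm, hu' m hm, pow_succ, ← this]
      push_cast; ring
  have kpos : (0:ℝ) < k := by exact_mod_cast (by omega : 0 < k)
  set x : ℝ := (h:ℝ) / k with hx
  set d : ℕ → ℝ := fun m => v m * x - u m with hd
  have dr : d r = 0 := by simp only [hd, vr, ur, hx]; field_simp; ring
  have drec : ∀ m, m + 2 ≤ r → d (m+2) = b (m+2) * d (m+1) + d m := by
    intro m hm
    simp only [hd]
    rw [hv' m hm, hu' m hm]; push_cast; ring
  have sgn : ∀ i m, m + 1 + i = r → d m * d (m+1) ≤ 0 := by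
    intro i
    induction i with
    | zero => intro m hm; rw [show m + 1 = r by omega, dr, mul_zero]
    | succ i ih =>
      intro m hm
      have a := ih (m+1) (by omega)
      rw [show m + 1 + 1 = m + 2 from rfl, drec m (by omega)] at a
      have : (0:ℝ) ≤ b (m+2) * d (m+1) ^ 2 := by positivity
      nlinarith
  have appr : ∀ m < r, |d m| * v (m+1) ≤ 1 := by
    intro m hm
    have s := sgn (r - (m+1)) m (by omega)
    have dt : ((u (m+1):ℝ) * v m - u m * v (m+1)) = (-1)^m := by exact_mod_cast det m hm
    have e : d m * v (m+1) - d (m+1) * v m = (-1)^m := by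
      rw [← dt]; simp only [hd]; ring
    have e2 : (d m * v (m+1) - d (m+1) * v m)^2 = 1 := by
      rw [e, ← pow_mul, mul_comm, pow_mul]; norm_num
    have p : 0 ≤ -(d m * d (m+1)) * (v m * v (m+1)) :=
      mul_nonneg (by linarith) (by positivity)
    have : (|d m| * v (m+1))^2 ≤ 1 := by
      rw [mul_pow, sq_abs]
      nlinarith [sq_nonneg (d (m+1) * v m)]
    have nn : 0 ≤ |d m| * v (m+1) := by positivity
    nlinarith
  have hpos : ∀ m ≤ r, (0:ℝ) < v m := fun m hm => by exact_mod_cast vpos m hm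
  have LB := level_bound (fun m => sawtooth (m * x + α)) v r (fun m => saw_abs _) v0 vpos vmono (by
    intro j hj N
    have cop : IsCoprime (u j : ℤ) (v j : ℤ) := by
      have := det j hj
      refine ⟨-(-1)^j * v (j+1), (-1)^j * u (j+1), ?_⟩
      have e : ((-1:ℤ)^j) * (-1)^j = 1 := by rw [← mul_pow]; norm_num
      calc _ = (-1)^j * ((u (j+1):ℤ) * v j - u j * v (j+1)) := by ring
        _ = 1 := by rw [this, e]
    have B := block_bound (u j) (v j) (vpos j hj.le) cop x (N * x + α) (1 / v (j+1)) (by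
      intro c hc
      have q := hpos j hj.le
      have q2 := hpos (j+1) hj
      have e : (c:ℝ) * x - c * (((u j:ℤ):ℝ) / v j) = c / v j * d j := by
        simp only [hd]; push_cast; field_simp
      rw [e, abs_mul, abs_of_nonneg (by positivity)]
      have c1 : (c:ℝ) / v j ≤ 1 := by rw [div_le_one q]; exact_mod_cast hc.le
      have c2 : |d j| ≤ 1 / v (j+1) := by rw [le_div_iff₀ q2]; exact appr j hj
      calc (c:ℝ) / v j * |d j| ≤ 1 * |d j| := by gcongr
        _ ≤ _ := by linarith)
    have e : ∀ c : ℕ, ((N + c : ℕ):ℝ) * x + α = N * x + α + c * x := by intro c; push_cast; ring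
    simp only [e]
    refine B.trans (le_of_eq ?_)
    ring)
  have SB := sum_bounds v r v0 vpos v2 (fun j hj => vmono (j+1) (by omega)) hr
  rw [vr] at LB
  refine LB.trans ?_
  rw [Finset.mul_sum]
  have : ∑ j ∈ range r, (1/2 * (Real.log ((v (j+1):ℝ) / v j) / v j) + 9/2 * (1 / (v j:ℝ)) + Efun v j / v j) =
    ∑ j ∈ range r, 1/2 * (Real.log ((v (j+1):ℝ) / v j) / v j) + ∑ j ∈ range r, (9/2 * (1 / (v j:ℝ)) + Efun v j / v j) := by
    rw [← Finset.sum_add_distrib]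
    refine Finset.sum_congr rfl fun j _ => ?_
    ring
  rw [this]
  linarith

/-- Bound for `V₁(h/k, α)` in terms of the continued fraction expansion of `h/k`:
`|V₁(h/k, α)| ≤ ∑_{m=0}^{r-1} log(v_{m+1}/v_m)/v_m + C` uniformly in `α ∈ (1/k)ℤ`,
where `v_0, …, v_r` are the denominators of the convergents of `h/k = [0; b_1, …, b_r]`
(with numerators `u_0, …, u_r`). -/
theorem V1_bound_continued_fraction :
    ∃ C : ℝ, 0 < C ∧ ∀ h k : ℕ, 1 ≤ h → h < k → Nat.Coprime h k →
      ∀ (r : ℕ) (b u v : ℕ → ℕ),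
        (∀ m, 1 ≤ m → m ≤ r → 1 ≤ b m) → (1 < r → 2 ≤ b r) →
        v 0 = 1 → u 0 = 0 →
        (1 ≤ r → v 1 = b 1) → (1 ≤ r → u 1 = 1) →
        (∀ m, 2 ≤ m → m ≤ r → v m = b m * v (m - 1) + v (m - 2)) →
        (∀ m, 2 ≤ m → m ≤ r → u m = b m * u (m - 1) + u (m - 2)) →
        v r = k → u r = h →
        ∀ α : ℝ, (∃ j : ℤ, α = (j : ℝ) / k) →
          ∀ V1 : ℝ, Tendsto (V1sum ((h : ℝ) / k) α) atTop (nhds V1) →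
            |V1| ≤ (∑ m ∈ Finset.range r,
                Real.log ((v (m + 1) : ℝ) / (v m : ℝ)) / (v m : ℝ)) + C := by
  refine ⟨131, by norm_num, ?_⟩
  intro h k hh hk hc r b u v hb _ v0 u0 v1 u1 hv hu vr ur α ⟨j, hj⟩ V1 hV
  have k0 : 0 < k := by omega
  have kpos : (0:ℝ) < k := by exact_mod_cast k0
  have CB := cf_bound h k hh hk r b u v hb v0 u0 v1 u1 hv hu vr ur
  set x : ℝ := (h:ℝ) / k with hx
  set L := ∑ m ∈ Finset.range r, Real.log ((v (m + 1) : ℝ) / (v m : ℝ)) / (v m : ℝ) with hL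
  -- the two odd periodic functions
  set F : ℤ → ℝ := fun n => 2 * Real.cos (2 * π * n * (j / k)) * sawtooth (n * x) with hF
  set G : ℤ → ℝ := fun n => sawtooth (n * x + j / k) + sawtooth (n * x - j / k) with hG
  have hxk : ∀ n : ℤ, ((n + k : ℤ):ℝ) * x = n * x + ((h:ℤ):ℝ) := by
    intro n; rw [hx]; push_cast; field_simp
  have Fper : ∀ n, F (n + k) = F n := by
    intro n
    simp only [hF]
    rw [hxk, saw_add_int]
    have : 2 * π * ((n + k : ℤ):ℝ) * (j / k) = 2 * π * n * (j / k) + (j:ℝ) * (2 * π) := by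
      push_cast; field_simp
    rw [this, Real.cos_add_int_mul_two_pi]
  have Fodd : ∀ n, F (-n) = - F n := by
    intro n
    simp only [hF]
    push_cast
    rw [neg_mul, saw_neg, show 2 * π * (-(n:ℝ)) * (j / k) = -(2 * π * n * (j / k)) by ring, Real.cos_neg]
    ring
  have Gper : ∀ n, G (n + k) = G n := by
    intro n
    simp only [hG]
    rw [hxk, show (n:ℝ) * x + ((h:ℤ):ℝ) + j / k = n * x + j / k + ((h:ℤ):ℝ) by ring,
      show (n:ℝ) * x + ((h:ℤ):ℝ) - j / k = n * x - j / k + ((h:ℤ):ℝ) by ring, saw_add_int, saw_add_int]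
  have Godd : ∀ n, G (-n) = - G n := by
    intro n
    simp only [hG]
    push_cast
    rw [show -(n:ℝ) * x + j / k = -(n * x - j / k) by ring,
      show -(n:ℝ) * x - j / k = -(n * x + j / k) by ring, saw_neg, saw_neg]
    ring
  have TF := odd_series k k0 F Fper Fodd
  have TG := odd_series k k0 G Gper Godd
  have D := duality h k k0 hc j
  have eD : ∑ a ∈ range k, F a * (2 * ∑ c ∈ range k, sawtooth ((c:ℝ) / k) * Real.sin (2 * π * a * c / k)) =
      ∑ a ∈ range k, G a * (2 * ∑ c ∈ range k, sawtooth ((c:ℝ) / k) * Real.sin (2 * π * a * c / k)) := by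
    simp only [hF, hG, Int.cast_natCast]
    exact D
  rw [eD] at TF
  have F0 : ∀ n : ℕ, F ((n * k : ℕ) : ℤ) = 0 := by
    intro n
    simp only [hF]
    have : (((n * k : ℕ) : ℤ) : ℝ) * x = ((n * h : ℤ) : ℝ) := by rw [hx]; push_cast; field_simp
    have z : sawtooth ((n * h : ℤ) : ℝ) = 0 := by
      unfold sawtooth; rw [Int.fract_intCast, if_pos rfl]
    rw [this, z, mul_zero]
  have hsub : Tendsto (fun n : ℕ => n * k) atTop atTop := tendsto_id.atTop_mul_const' k0
  have TV := hV.comp hsub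
  have eV : ∀ n : ℕ, (V1sum x α ∘ fun n => n * k) n = ∑ m ∈ range (n * k), F m / m := by
    intro n
    simp only [Function.comp, V1sum]
    have e1 : ∑ m ∈ range (n * k + 1), F m / m = ∑ m ∈ range (n * k), F m / m := by
      rw [Finset.sum_range_succ, F0]; simp
    have e2 : Icc 1 (n * k) = Ico 1 (n * k + 1) := by ext i; simp only [Finset.mem_Icc, Finset.mem_Ico]; omega
    rw [← e1, e2, Finset.mul_sum, Finset.range_eq_Ico, Finset.sum_eq_sum_Ico_succ_bot (Nat.succ_pos _)]
    simp only [Nat.cast_zero, div_zero, zero_add]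
    refine Finset.sum_congr rfl fun m _ => ?_
    simp only [hF, hj, Int.cast_natCast]
    ring
  have TV' : Tendsto (fun n : ℕ => ∑ m ∈ range (n * k), F m / m) atTop (nhds V1) := TV.congr eV
  have VG := tendsto_nhds_unique TV' TF
  rw [← VG] at TG
  -- bound the partial sums of G
  have Gabs : ∀ n, |G n| ≤ 1 := by
    intro n
    refine (abs_add_le _ _).trans ?_
    linarith [saw_abs (n * x + j / k), saw_abs (n * x - j / k)]
  have Gsum : ∑ c ∈ range k, G c = 0 := by
    have := sum_period k k0 G Gper (-1) 0 (by exact isCoprime_one_left.neg_left)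
    simp only [neg_mul, one_mul, add_zero, Godd, Finset.sum_neg_distrib] at this
    linarith
  have Gblock : ∀ N : ℕ, |∑ c ∈ range k, G ((N + c : ℕ))| ≤ 0 := by
    intro N
    have := sum_period k k0 G Gper 1 N isCoprime_one_left
    rw [Gsum] at this
    have e : ∑ c ∈ range k, G ((N + c : ℕ)) = 0 := by
      rw [← this]; refine Finset.sum_congr rfl fun c _ => ?_
      congr 1; push_cast; ring
    rw [e]; simp
  have Gpart : ∀ N t : ℕ, |∑ c ∈ range t, G ((N + c : ℕ))| ≤ (k:ℝ) + 0 / k * t := by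
    refine partial_bound (fun n : ℕ => G n) k k0 k 0 le_rfl Gblock ?_
    intro N t ht
    refine (Finset.abs_sum_le_sum_abs _ _).trans ?_
    refine (Finset.sum_le_sum fun c _ => Gabs _).trans ?_
    simp; exact_mod_cast ht.le
  have first : |∑ m ∈ range k, G m / m| ≤ L + 130 := by
    have a1 := CB (j / k)
    have a2 := CB (-(j / k))
    have e : ∑ m ∈ range k, G m / m = ∑ m ∈ Ico 1 k, sawtooth (m * x + j / k) / m +
        ∑ m ∈ Ico 1 k, sawtooth (m * x + -(j / k)) / m := by
      rw [← Finset.sum_add_distrib, Finset.range_eq_Ico, Finset.sum_eq_sum_Ico_succ_bot k0]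
      simp only [hG, Int.cast_natCast, Nat.cast_zero, div_zero, zero_add, ← sub_eq_add_neg, add_div]
    rw [e]
    refine (abs_add_le _ _).trans ?_
    linarith
  have tail : ∀ T : ℕ, |∑ i ∈ range T, G ((k + i : ℕ)) / ((k + i : ℕ):ℝ)| ≤ 1 := by
    intro T
    have := abel_bound (fun i => G ((k + i : ℕ))) (fun i => 1 / ((k + i : ℕ):ℝ)) k (0 / k)
      (by
        intro a b hab
        show 1 / ((k + b : ℕ):ℝ) ≤ 1 / ((k + a : ℕ):ℝ)
        apply one_div_le_one_div_of_le
        · push_cast; positivity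
        · exact_mod_cast (by omega))
      (fun i => by positivity) T (fun t _ => Gpart k t)
    simp only [mul_one_div] at this
    refine this.trans (le_of_eq ?_)
    rw [add_zero, zero_div, zero_mul, add_zero, div_self kpos.ne']
  have ev : ∀ᶠ n : ℕ in atTop, |∑ m ∈ range (n * k), G m / m| ≤ L + 131 := by
    filter_upwards [eventually_ge_atTop 1] with n hn
    obtain ⟨l, rfl⟩ : ∃ l, n = l + 1 := ⟨n - 1, by omega⟩
    rw [show (l + 1) * k = k + l * k by ring, Finset.sum_range_add]
    refine (abs_add_le _ _).trans ?_
    linarith [tail (l * k)]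
  exact le_of_tendsto TG.abs ev
end

section
/- Let k ∈ ℕ, and let h, n ∈ ℤ with gcd(h,k) = 1, and let h̄ be any integer with h·h̄ ≡ 1 (mod k). Then ∑_{m=1}^{k−1} cot(π m h/k) · e^{−2πi n m/k} = −2 i k · ((n h̄/k)). -/
open Real Filter Finset Complex

lemma T_zero {v : ℂ} {k : ℕ} (hv : IsPrimitiveRoot v k) :
    ∑ m ∈ Finset.Ico 1 k, (1 + v ^ m) / (1 - v ^ m) = 0 := by
  have hk : ∀ m ∈ Finset.Ico 1 k, (1 + v ^ (k - m)) / (1 - v ^ (k - m)) =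
      - ((1 + v ^ m) / (1 - v ^ m)) := by
    intro m hm
    rw [Finset.mem_Ico] at hm
    have h1 : v ^ m ≠ 1 := hv.pow_ne_one_of_pos_of_lt (by omega) hm.2
    have h2 : v ^ (k - m) ≠ 1 := hv.pow_ne_one_of_pos_of_lt (by omega) (by omega)
    have h3 : v ^ (k - m) * v ^ m = 1 := by
      rw [← pow_add, Nat.sub_add_cancel hm.2.le, hv.pow_eq_one]
    have h1' : 1 - v ^ m ≠ 0 := sub_ne_zero.2 h1.symm
    have h2' : 1 - v ^ (k - m) ≠ 0 := sub_ne_zero.2 h2.symm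
    rw [← neg_div, div_eq_div_iff h2' h1']
    linear_combination (-2) * h3
  have hs : ∑ m ∈ Finset.Ico 1 k, (1 + v ^ (k - m)) / (1 - v ^ (k - m)) =
      ∑ m ∈ Finset.Ico 1 k, (1 + v ^ m) / (1 - v ^ m) := by
    refine Finset.sum_bij' (fun m _ => k - m) (fun m _ => k - m) ?_ ?_ ?_ ?_ ?_
    all_goals intro m hm
    all_goals simp only [Finset.mem_Ico] at *
    all_goals omega
  rw [Finset.sum_congr rfl hk, Finset.sum_neg_distrib] at hs
  linear_combination (-1 / 2) * hs

lemma geom_zero {v : ℂ} {k : ℕ} (hv : IsPrimitiveRoot v k) {r : ℕ} (hr : 0 < r) (hrk : r < k) :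
    ∑ m ∈ Finset.Ico 1 k, (v ^ m) ^ r = -1 := by
  have h1 : v ^ r ≠ 1 := hv.pow_ne_one_of_pos_of_lt (by omega) hrk
  have h2 := mul_geom_sum (v ^ r) k
  rw [← pow_mul, mul_comm r k, pow_mul, hv.pow_eq_one, one_pow, sub_self] at h2
  have h3 := (mul_eq_zero.1 h2).resolve_left (sub_ne_zero.2 h1)
  rw [Finset.range_eq_Ico, Finset.sum_eq_sum_Ico_succ_bot (by omega)] at h3
  simp only [← pow_mul] at h3 ⊢
  simp only [mul_comm _ r]
  simp at h3
  linear_combination h3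

lemma T_succ {v : ℂ} {k : ℕ} (hv : IsPrimitiveRoot v k) (r : ℕ) :
    ∑ m ∈ Finset.Ico 1 k, (1 + v ^ m) / (1 - v ^ m) * (v ^ m) ^ (r + 1) =
    ∑ m ∈ Finset.Ico 1 k, (1 + v ^ m) / (1 - v ^ m) * (v ^ m) ^ r -
     (∑ m ∈ Finset.Ico 1 k, (v ^ m) ^ r + ∑ m ∈ Finset.Ico 1 k, (v ^ m) ^ (r + 1)) := by
  rw [← Finset.sum_add_distrib, ← Finset.sum_sub_distrib]
  refine Finset.sum_congr rfl fun m hm => ?_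
  rw [Finset.mem_Ico] at hm
  have h1 : v ^ m ≠ 1 := hv.pow_ne_one_of_pos_of_lt (by omega) hm.2
  have h1' : 1 - v ^ m ≠ 0 := sub_ne_zero.2 h1.symm
  generalize v ^ m = u at *
  field_simp
  ring

lemma T_eq {v : ℂ} {k : ℕ} (hv : IsPrimitiveRoot v k) (r : ℕ) (hrk : r + 1 < k) :
    ∑ m ∈ Finset.Ico 1 k, (1 + v ^ m) / (1 - v ^ m) * (v ^ m) ^ (r + 1) =
      2 * (r + 1) - k := by
  induction r with
  | zero =>
    rw [T_succ hv, geom_zero hv (by omega) hrk]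
    simp only [pow_zero, mul_one, T_zero hv]
    simp
    rw [Nat.cast_sub (by omega)]
    push_cast
    ring
  | succ r ih =>
    rw [T_succ hv, geom_zero hv (by omega) hrk, geom_zero hv (by omega) (by omega),
      ih (by omega)]
    push_cast
    ring

/-- For `gcd(h,k) = 1` and any inverse `h̄` of `h` mod `k`,
`∑_{m=1}^{k-1} cot(π m h/k) e^{-2πinm/k} = -2ik·((n h̄/k))`. -/
theorem cot_twisted_sum_eq_sawtooth (k : ℕ) (h n hbar : ℤ)
    (hcop : Int.gcd h k = 1) (hinv : (h * hbar) % (k : ℤ) = 1 % (k : ℤ)) :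
    ∑ m ∈ Finset.Ico 1 k,
        (Real.cot (π * m * h / k) : ℂ) * Complex.exp (-(2 * π * Complex.I * n * m / k)) =
      -2 * Complex.I * k * (sawtooth ((n : ℝ) * hbar / k) : ℂ) := by
  rcases Nat.eq_zero_or_pos k with rfl | hk
  · simp
  have hk0 : (k : ℂ) ≠ 0 := by exact_mod_cast hk.ne'
  have hkR : (k : ℝ) ≠ 0 := by exact_mod_cast hk.ne'
  have hkZ : (k : ℤ) ≠ 0 := by exact_mod_cast hk.ne'
  obtain ⟨r, hr⟩ : ∃ r : ℕ, (r : ℤ) = (n * hbar) % k :=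
    ⟨((n * hbar) % k).toNat, Int.toNat_of_nonneg (Int.emod_nonneg _ hkZ)⟩
  have hrk : r < k := by
    have := Int.emod_lt_of_pos (n * hbar) (show (0 : ℤ) < k by exact_mod_cast hk)
    omega
  obtain ⟨q, hq⟩ : ∃ q : ℤ, n * hbar = r + k * q :=
    ⟨(n * hbar) / k, by rw [hr]; exact (Int.emod_add_mul_ediv _ _).symm⟩
  obtain ⟨t, ht⟩ : ∃ t : ℤ, n = h * r + k * t := by
    obtain ⟨s, hs⟩ := Int.ModEq.dvd (show h * hbar ≡ 1 [ZMOD k] from hinv)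
    exact ⟨n * s + h * q, by linear_combination n * hs + h * hq⟩
  have hfr : Int.fract ((n : ℝ) * hbar / k) = r / k := by
    have : (n : ℝ) * hbar / k = r / k + (q : ℤ) := by
      field_simp
      exact_mod_cast hq
    rw [this, Int.fract_add_intCast, Int.fract_eq_self]
    constructor
    · positivity
    · rw [div_lt_one (by positivity)]
      exact_mod_cast hrk
  set v : ℂ := (Complex.exp (2 * π * Complex.I / k)) ^ (-h) with hvdef
  have hv : IsPrimitiveRoot v k :=
    (Complex.isPrimitiveRoot_exp k hk.ne').zpow_of_gcd_eq_one (-h) (by rw [Int.neg_gcd]; exact hcop)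
  have hve : v = Complex.exp (-(2 * π * Complex.I * h / k)) := by
    rw [hvdef, ← Complex.exp_int_mul]
    congr 1
    push_cast
    ring
  have hterm : ∀ m ∈ Finset.Ico 1 k,
      (Real.cot (π * m * h / k) : ℂ) * Complex.exp (-(2 * π * Complex.I * n * m / k)) =
      Complex.I * ((1 + v ^ m) / (1 - v ^ m) * (v ^ m) ^ r) := by
    intro m hm
    rw [Finset.mem_Ico] at hm
    have h1 : v ^ m ≠ 1 := hv.pow_ne_one_of_pos_of_lt (by omega) hm.2
    have hvm : v ^ m = Complex.exp (-(2 * Complex.I * (π * m * h / k))) := by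
      rw [hve, ← Complex.exp_nat_mul]
      congr 1
      ring
    have he : Complex.exp (-(2 * π * Complex.I * n * m / k)) = (v ^ m) ^ r := by
      rw [hvm, ← Complex.exp_nat_mul, Complex.exp_eq_exp_iff_exists_int]
      refine ⟨-(t * m), ?_⟩
      have : (n : ℂ) = h * r + k * t := by exact_mod_cast ht
      rw [this]
      push_cast
      field_simp
      ring
    have hw : Complex.exp (2 * Complex.I * (π * m * h / k)) = (v ^ m)⁻¹ := by
      rw [hvm, Complex.exp_neg, inv_inv]
    have hu0 : v ^ m ≠ 0 := by rw [hvm]; exact Complex.exp_ne_zero _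
    rw [he, Complex.ofReal_cot, Complex.cot_eq_exp_ratio]
    push_cast
    rw [hw]
    generalize v ^ m = u at *
    have h2 : 1 - u ≠ 0 := sub_ne_zero.2 h1.symm
    have h3 : 1 - u⁻¹ ≠ 0 := by
      rw [sub_ne_zero]
      intro h
      exact h1 (by rw [← inv_inv u, ← h, inv_one])
    rw [← mul_assoc]
    congr 1
    rw [← mul_div_assoc, div_eq_div_iff (mul_ne_zero Complex.I_ne_zero h3) h2]
    have hI := Complex.I_mul_I
    field_simp
    linear_combination (-(u - 1) * (1 + u)) * Complex.I_sq
  rw [Finset.sum_congr rfl hterm, ← Finset.mul_sum, sawtooth, hfr]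
  rcases r with _ | r
  · simp [T_zero hv]
  · rw [T_eq hv r hrk, if_neg (by positivity)]
    push_cast
    field_simp
    ring
end

section
/- For every x ∈ ℝ \ ℤ, the series ∑_{n=1}^∞ cos(2πnx)/n converges (as a limit of partial sums) and ∑_{n=1}^∞ 2·cos(2πnx)/n = −log(4·sin²(πx)) = −log((1 − e^{−2πix})(1 − e^{2πix})). -/
open Real Filter Finset Complex

lemma aux_series (w : ℂ) (hw : ‖w‖ = 1) (hw1 : w ≠ 1) :
    Tendsto (fun M : ℕ => ∑ n ∈ Finset.range M, w ^ n / n) atTop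
      (nhds (-Complex.log (1 - w))) := by
  have hC : CauchySeq (fun M : ℕ => ∑ n ∈ Finset.range M, (1 / ((n : ℝ) + 1)) • w ^ (n + 1)) := by
    apply Antitone.cauchySeq_series_mul_of_tendsto_zero_of_bounded (b := 2 / ‖w - 1‖)
    · intro a b hab
      have : (a : ℝ) ≤ b := by exact_mod_cast hab
      show 1 / ((b : ℝ) + 1) ≤ 1 / ((a : ℝ) + 1)
      gcongr
    · exact tendsto_one_div_add_atTop_nhds_zero_nat
    · intro n
      have : ∑ i ∈ Finset.range n, w ^ (i + 1) = w * ((w ^ n - 1) / (w - 1)) := by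
        rw [← geom_sum_eq hw1, Finset.mul_sum]
        exact Finset.sum_congr rfl fun i _ => by ring
      rw [this, norm_mul, hw, one_mul, norm_div]
      gcongr
      calc ‖w ^ n - 1‖ ≤ ‖w ^ n‖ + ‖(1 : ℂ)‖ := norm_sub_le _ _
        _ = 2 := by rw [norm_pow, hw]; norm_num
  obtain ⟨l, hl⟩ := cauchySeq_tendsto_of_complete hC
  have hl' : Tendsto (fun M : ℕ => ∑ n ∈ Finset.range M, w ^ n / n) atTop (nhds l) := by
    rw [← tendsto_add_atTop_iff_nat 1]
    refine hl.congr fun M => ?_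
    rw [Finset.sum_range_succ']
    simp only [Nat.cast_zero, div_zero, add_zero]
    refine Finset.sum_congr rfl fun i _ => ?_
    rw [Complex.real_smul]
    push_cast
    ring
  have hab := Complex.tendsto_tsum_powerSeries_nhdsWithin_lt hl'
  rw [tendsto_map'_iff] at hab
  have hre : w.re < 1 := by
    rcases lt_or_eq_of_le ((Complex.re_le_norm w).trans hw.le) with h | h
    · exact h
    · exfalso
      apply hw1
      have h2 : w.re * w.re + w.im * w.im = 1 := by
        rw [← Complex.normSq_apply, Complex.normSq_eq_norm_sq, hw]; norm_num
      apply Complex.ext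
      · simpa using h
      · rw [h] at h2
        simp only [Complex.one_im]
        nlinarith
  have hcont : Tendsto (fun r : ℝ => -Complex.log (1 - (r : ℂ) * w)) (nhdsWithin 1 (Set.Iio 1))
      (nhds (-Complex.log (1 - w))) := by
    have : ContinuousAt (fun r : ℝ => -Complex.log (1 - (r : ℂ) * w)) 1 := by
      refine ContinuousAt.neg (ContinuousAt.clog (by fun_prop) ?_)
      left
      simpa using hre
    have h := this.tendsto.mono_left (nhdsWithin_le_nhds (s := Set.Iio 1))
    simpa using h
  have heq : l = -Complex.log (1 - w) := by
    refine tendsto_nhds_unique (hab.congr' ?_) hcont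
    have h0 : ∀ᶠ r : ℝ in nhdsWithin 1 (Set.Iio 1), r ∈ Set.Ioo 0 1 :=
      Ioo_mem_nhdsLT (by norm_num)
    filter_upwards [h0] with r hr
    have hn : ‖(r : ℂ) * w‖ < 1 := by
      rw [norm_mul, hw, mul_one, Complex.norm_real, Real.norm_eq_abs, abs_of_pos hr.1]
      exact hr.2
    rw [← (Complex.hasSum_taylorSeries_neg_log hn).tsum_eq]
    refine tsum_congr fun n => ?_
    rw [mul_pow]
    ring
  rwa [heq] at hl'

lemma aux_exp (x : ℝ) : ((4 * Real.sin (π * x) ^ 2 : ℝ) : ℂ) =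
    (1 - Complex.exp (-(2 * π * Complex.I * x))) * (1 - Complex.exp (2 * π * Complex.I * x)) := by
  have e1 : Complex.exp (2 * π * Complex.I * x) = Complex.exp ((π * x : ℂ) * Complex.I) ^ 2 := by
    rw [← Complex.exp_nat_mul]; congr 1; push_cast; ring
  have e2 : Complex.exp (-(2 * π * Complex.I * x)) =
      Complex.exp (-(π * x : ℂ) * Complex.I) ^ 2 := by
    rw [← Complex.exp_nat_mul]; congr 1; push_cast; ring
  have e3 : Complex.exp (-(π * x : ℂ) * Complex.I) * Complex.exp ((π * x : ℂ) * Complex.I) = 1 := by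
    rw [← Complex.exp_add]; simp
  rw [e1, e2]
  push_cast
  rw [Complex.sin]
  generalize Complex.exp (-(π * x : ℂ) * Complex.I) = a at *
  generalize Complex.exp ((π * x : ℂ) * Complex.I) = b at *
  linear_combination (a - b) ^ 2 * Complex.I_sq + (1 - a * b) * e3

/-- For `x ∈ ℝ \ ℤ`, the series `∑_{n≥1} 2·cos(2πnx)/n` converges to
`-log(4 sin²(πx))`, which equals `-log((1 - e^{-2πix})(1 - e^{2πix}))`. -/
theorem sum_two_cos_div_eq_neg_log_four_sin_sq (x : ℝ) (hx : Int.fract x ≠ 0) :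
    Tendsto (fun M : ℕ => ∑ n ∈ Finset.Icc 1 M, 2 * Real.cos (2 * π * n * x) / n)
        atTop (nhds (-Real.log (4 * Real.sin (π * x) ^ 2))) ∧
      ((4 * Real.sin (π * x) ^ 2 : ℝ) : ℂ) =
        (1 - Complex.exp (-(2 * π * Complex.I * x))) * (1 - Complex.exp (2 * π * Complex.I * x)) := by
  refine ⟨?_, aux_exp x⟩
  set w : ℂ := Complex.exp (2 * π * Complex.I * x) with hwdef
  have hw' : w = Complex.exp ((2 * π * x : ℝ) * Complex.I) := by
    rw [hwdef]; congr 1; push_cast; ring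
  have hw : ‖w‖ = 1 := by rw [hw', Complex.norm_exp_ofReal_mul_I]
  have hw1 : w ≠ 1 := by
    intro h
    rw [hwdef, Complex.exp_eq_one_iff] at h
    obtain ⟨n, hn⟩ := h
    have h2 : (x : ℂ) = n := by
      apply mul_left_cancel₀ Complex.two_pi_I_ne_zero
      rw [hn]; ring
    have h3 : x = n := by exact_mod_cast h2
    apply hx
    rw [h3, Int.fract_intCast]
  have hlim := aux_series w hw hw1
  have hre := ((Complex.continuous_re.tendsto _).comp hlim).const_mul 2
  rw [← tendsto_add_atTop_iff_nat 1] at hre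
  have hconj : Complex.exp (-(2 * π * Complex.I * x)) = (starRingEnd ℂ) w := by
    rw [hwdef, ← Complex.exp_conj]; congr 1; simp; left; exact (map_ofNat (starRingEnd ℂ) 2).symm
  have hns : 4 * Real.sin (π * x) ^ 2 = ‖1 - w‖ ^ 2 := by
    have h := aux_exp x
    rw [hconj, ← hwdef] at h
    have h2 : (1 - (starRingEnd ℂ) w) * (1 - w) = ((‖1 - w‖ ^ 2 : ℝ) : ℂ) := by
      rw [← Complex.normSq_eq_norm_sq, Complex.normSq_eq_conj_mul_self]; simp
    rw [h2] at h
    exact_mod_cast h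
  rw [hns, Real.log_pow]
  have hval : -(((2 : ℕ) : ℝ) * Real.log ‖1 - w‖) = 2 * (-Complex.log (1 - w)).re := by
    rw [Complex.neg_re, Complex.log_re]; push_cast; ring
  rw [hval]
  refine hre.congr fun M => ?_
  simp only [Function.comp]
  rw [Complex.re_sum, Finset.mul_sum, Finset.range_eq_Ico, Finset.sum_eq_sum_Ico_succ_bot (by omega)]
  simp only [Nat.cast_zero, div_zero, Complex.zero_re, mul_zero, zero_add]
  refine Finset.sum_congr (by ext; simp) fun n _ => ?_
  have : w ^ n = Complex.exp ((2 * π * n * x : ℝ) * Complex.I) := by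
    rw [hwdef, ← Complex.exp_nat_mul]; congr 1; push_cast; ring
  rw [this, Complex.div_natCast_re, Complex.exp_ofReal_mul_I_re]
  ring
end

section
/- For every x ∈ ℝ, the series ∑_{n=1}^∞ sin(2πnx)/(πn) converges (as a limit of partial sums) and ∑_{n=1}^∞ sin(2πnx)/(πn) = ((x)). -/
open Real Filter Finset

theorem saw_aux_arg (t : ℝ) (h0 : 0 < t) (h1 : t < 1) :
    Complex.arg (1 - Complex.exp ((2 * π * t : ℝ) * Complex.I)) = π * t - π / 2 := by
  have hs : 0 < Real.sin (π * t) :=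
    Real.sin_pos_of_pos_of_lt_pi (by positivity) (by nlinarith [Real.pi_pos])
  have e : 1 - Complex.exp ((2 * π * t : ℝ) * Complex.I) =
      ((2 * Real.sin (π * t) : ℝ) : ℂ) * (Complex.cos ((π * t - π / 2 : ℝ) : ℂ) +
        Complex.sin ((π * t - π / 2 : ℝ) : ℂ) * Complex.I) := by
    have e2 : 2 * π * t = 2 * (π * t) := by ring
    rw [Complex.exp_mul_I, ← Complex.ofReal_cos, ← Complex.ofReal_sin, ← Complex.ofReal_cos,
      ← Complex.ofReal_sin, Real.cos_sub_pi_div_two, Real.sin_sub_pi_div_two, e2,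
      Real.cos_two_mul, Real.sin_two_mul]
    have := Real.sin_sq_add_cos_sq (π * t)
    apply Complex.ext
    · simp [-Complex.ofReal_sin, -Complex.ofReal_cos, ← Complex.ofReal_pow]
      linarith
    · simp [-Complex.ofReal_sin, -Complex.ofReal_cos, ← Complex.ofReal_pow]
  rw [e, Complex.arg_mul_cos_add_sin_mul_I (by positivity)]
  constructor <;> nlinarith [Real.pi_pos]

theorem saw_aux_cauchy (z : ℂ) (hz : ‖z‖ = 1) (hz1 : z ≠ 1) :
    CauchySeq (fun n : ℕ => ∑ i ∈ range n, z ^ (i + 1) / ((i : ℂ) + 1)) := by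
  have ha : Antitone (fun i : ℕ => 1 / ((i : ℝ) + 1)) := by
    intro a b hab
    have : (a : ℝ) ≤ b := by exact_mod_cast hab
    exact one_div_le_one_div_of_le (by positivity) (by linarith)
  have hb : ∀ n : ℕ, ‖∑ i ∈ range n, z ^ (i + 1)‖ ≤ 2 / ‖z - 1‖ := by
    intro n
    have hne : z - 1 ≠ 0 := sub_ne_zero.2 hz1
    simp_rw [pow_succ]
    rw [← Finset.sum_mul, geom_sum_eq hz1, norm_mul, hz, mul_one, norm_div]
    gcongr
    calc ‖z ^ n - 1‖ ≤ ‖z ^ n‖ + ‖(1 : ℂ)‖ := norm_sub_le _ _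
      _ = 2 := by rw [norm_pow, hz]; norm_num
  have := ha.cauchySeq_series_mul_of_tendsto_zero_of_bounded
    tendsto_one_div_add_atTop_nhds_zero_nat hb
  convert this using 4 with n i
  rw [Complex.real_smul]
  push_cast
  ring

theorem saw_aux_log (z : ℂ) (hz : ‖z‖ = 1) (hz1 : z ≠ 1) :
    Tendsto (fun n : ℕ => ∑ i ∈ range n, z ^ i / (i : ℂ)) atTop
      (nhds (-Complex.log (1 - z))) := by
  obtain ⟨l, hl⟩ := cauchySeq_tendsto_of_complete (saw_aux_cauchy z hz hz1)
  have h : Tendsto (fun n : ℕ => ∑ i ∈ range n, z ^ i / (i : ℂ)) atTop (nhds l) := by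
    rw [← tendsto_add_atTop_iff_nat 1]
    refine hl.congr fun n => ?_
    rw [Finset.sum_range_succ']
    simp
  have abel := Complex.tendsto_tsum_powerSeries_nhdsWithin_lt h
  have hre : z.re < 1 := by
    refine lt_of_le_of_ne (hz ▸ Complex.re_le_norm z) fun hr => hz1 ?_
    have h2 := Complex.sq_norm z
    rw [hz, Complex.normSq_apply, hr] at h2
    have : z.im = 0 := by nlinarith
    exact Complex.ext hr this
  have hsl : 1 - z ∈ Complex.slitPlane := Or.inl (by simpa using hre)
  have hc : Tendsto (fun w : ℂ => -Complex.log (1 - w * z)) (nhds 1)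
      (nhds (-Complex.log (1 - z))) := by
    have : ContinuousAt (fun w : ℂ => -Complex.log (1 - w * z)) 1 :=
      (ContinuousAt.clog (by fun_prop) (by simpa using hsl)).neg
    simpa [ContinuousAt] using this
  have hr : Tendsto (fun r : ℝ => (r : ℂ)) (nhdsWithin 1 (Set.Iio 1)) (nhds 1) := by
    have : Tendsto (fun r : ℝ => (r : ℂ)) (nhds 1) (nhds ((1 : ℝ) : ℂ)) :=
      Complex.continuous_ofReal.tendsto 1
    rw [Complex.ofReal_one] at this
    exact this.mono_left nhdsWithin_le_nhds
  have h3 := hc.comp hr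
  have abel' := tendsto_map'_iff.1 abel
  have : l = -Complex.log (1 - z) := by
    refine tendsto_nhds_unique abel' (h3.congr' ?_)
    have h0 : Set.Ioo (0 : ℝ) 1 ∈ nhdsWithin (1 : ℝ) (Set.Iio 1) :=
      Ioo_mem_nhdsLT (by norm_num)
    filter_upwards [h0] with r hr
    have hn : ‖(r : ℂ) * z‖ < 1 := by
      rw [norm_mul, hz, mul_one, Complex.norm_real, Real.norm_of_nonneg hr.1.le]
      exact hr.2
    have := (Complex.hasSum_taylorSeries_neg_log hn).tsum_eq
    simp only [Function.comp]
    rw [← this]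
    refine tsum_congr fun n => ?_
    rw [mul_pow]; ring
  rwa [← this]

/-- For every `x ∈ ℝ`, the series `∑_{n≥1} sin(2πnx)/(πn)` converges to `((x))`. -/
theorem sum_sin_div_eq_sawtooth (x : ℝ) :
    Tendsto (fun M : ℕ => ∑ n ∈ Finset.Icc 1 M, Real.sin (2 * π * n * x) / (π * n))
      atTop (nhds (sawtooth x)) := by
  have hx : (⌊x⌋ : ℝ) + Int.fract x = x := Int.floor_add_fract x
  have hsin : ∀ n : ℕ, Real.sin (2 * π * n * x) = Real.sin (n * (2 * π * Int.fract x)) := by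
    intro n
    have : 2 * π * n * x = n * (2 * π * Int.fract x) + ((n * ⌊x⌋ : ℤ) : ℝ) * (2 * π) := by
      push_cast
      nth_rewrite 1 [← hx]
      ring
    rw [this, Real.sin_add_int_mul_two_pi]
  simp_rw [hsin]
  unfold sawtooth
  split_ifs with h
  · simp [h]
  have h0 : 0 < Int.fract x := lt_of_le_of_ne (Int.fract_nonneg x) (Ne.symm h)
  have h1 := Int.fract_lt_one x
  generalize Int.fract x = t at *
  set z : ℂ := Complex.exp ((2 * π * t : ℝ) * Complex.I) with hzdef
  have harg := saw_aux_arg t h0 h1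
  rw [← hzdef] at harg
  have hz : ‖z‖ = 1 := Complex.norm_exp_ofReal_mul_I _
  have hz1 : z ≠ 1 := by
    intro hz1
    rw [hzdef, Complex.exp_eq_one_iff] at hz1
    obtain ⟨k, hk⟩ := hz1
    have hk' := congrArg Complex.im hk
    simp at hk'
    have : t = k := by
      have := Real.pi_pos
      have h4 : (2 * π) * t = (2 * π) * k := by linarith
      exact mul_left_cancel₀ (by positivity) h4
    rw [this] at h0 h1
    have a : (0 : ℤ) < k := by exact_mod_cast h0
    have b : k < (1 : ℤ) := by exact_mod_cast h1
    omega
  have main := (Complex.continuous_im.tendsto _).comp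
    ((tendsto_add_atTop_iff_nat 1).2 (saw_aux_log z hz hz1))
  have main2 := main.const_mul (1 / π)
  have hv : 1 / π * (-Complex.log (1 - z)).im = 1 / 2 - t := by
    rw [Complex.neg_im, Complex.log_im, harg]
    field_simp
    ring
  rw [hv] at main2
  refine main2.congr fun M => ?_
  simp only [Function.comp]
  have hI : Finset.Icc 1 M = Finset.Ico 1 (M + 1) := by
    ext a
    simp only [Finset.mem_Icc, Finset.mem_Ico]
    omega
  rw [Complex.im_sum, Finset.mul_sum, Finset.sum_range_succ', hI, Finset.sum_Ico_eq_sum_range]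
  simp only [Nat.cast_zero, div_zero, Complex.zero_im, mul_zero, add_zero, Nat.add_sub_cancel]
  refine Finset.sum_congr rfl fun n _ => ?_
  have he : z ^ (n + 1) = Complex.exp (((1 + n : ℕ) * (2 * π * t) : ℝ) * Complex.I) := by
    rw [hzdef, ← Complex.exp_nat_mul]
    congr 1
    push_cast
    ring
  rw [Complex.div_natCast_im, he, Complex.exp_ofReal_mul_I_im, Nat.add_comm n 1]
  field_simp
end

section
/- The function g : ℝ → ℝ defined by g(x) := π·cot(πx) − 1/{x} + 1/{−x} for x ∉ ℤ and g(x) := 0 for x ∈ ℤ is odd, 1-periodic, and bounded on ℝ. -/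
open Real

lemma aux_cot_bound (y : ℝ) (h0 : 0 < y) (h1 : y ≤ 1 / 2) :
    |π * Real.cot (π * y) - 1 / y| ≤ 8 := by
  have hpi := Real.pi_pos
  have hpi4 := Real.pi_lt_d2
  obtain ⟨t, ht⟩ : ∃ t, t = π * y := ⟨_, rfl⟩
  have ht0 : 0 < t := by rw [ht]; positivity
  have ht1 : t ≤ π / 2 := by rw [ht]; nlinarith
  have hs : 2 / π * t ≤ Real.sin t := Real.mul_le_sin ht0.le ht1
  have hs0 : 0 < Real.sin t := lt_of_lt_of_le (by positivity) hs
  have hs1 := Real.sin_gt_sub_cube ht0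
  have hs2 := Real.sin_lt ht0
  have hc := Real.one_sub_sq_div_two_le_cos (x := t)
  have hc1 := Real.cos_le_one t
  have ht3 : 0 < t ^ 3 := by positivity
  have hnum : |t * Real.cos t - Real.sin t| ≤ t ^ 3 / 2 := by
    rw [abs_le]; constructor <;> nlinarith
  have e : π * Real.cot (π * y) - 1 / y
      = π * (t * Real.cos t - Real.sin t) / (t * Real.sin t) := by
    rw [← ht, Real.cot_eq_cos_div_sin]
    have : y = t / π := by rw [ht]; field_simp
    rw [this]; field_simp
  rw [e, abs_div, abs_mul, abs_of_pos hpi, abs_of_pos (mul_pos ht0 hs0),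
    div_le_iff₀ (mul_pos ht0 hs0)]
  have hs' : 2 * t ≤ π * Real.sin t := by
    have := mul_le_mul_of_nonneg_left hs hpi.le
    have e2 : π * (2 / π * t) = 2 * t := by field_simp
    linarith
  have hst : t / 2 ≤ Real.sin t := by nlinarith
  have ht2 : t ≤ 1.6 := by linarith
  have htt : t ^ 2 ≤ 2.56 := by nlinarith
  have A : π * |t * Real.cos t - Real.sin t| ≤ 3.15 * (t ^ 3 / 2) :=
    mul_le_mul hpi4.le hnum (abs_nonneg _) (by norm_num)
  have B : t * (t / 2) ≤ t * Real.sin t := mul_le_mul_of_nonneg_left hst ht0.le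
  have C : t ^ 3 ≤ 1.6 * t ^ 2 := by nlinarith [sq_nonneg t]
  nlinarith [sq_nonneg t]

/-- The function `g(x) = π cot(πx) - 1/{x} + 1/{-x}` (extended by `0` on `ℤ`)
is odd, `1`-periodic and bounded. -/
theorem cot_minus_fract_inv_odd_periodic_bounded (g : ℝ → ℝ)
    (hg : ∀ x : ℝ, g x =
      if Int.fract x = 0 then 0
      else π * Real.cot (π * x) - 1 / Int.fract x + 1 / Int.fract (-x)) :
    (∀ x : ℝ, g (-x) = -g x) ∧ (∀ x : ℝ, g (x + 1) = g x) ∧ ∃ M : ℝ, ∀ x : ℝ, |g x| ≤ M := by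
  have hodd : ∀ x : ℝ, g (-x) = -g x := by
    intro x
    rw [hg, hg]
    by_cases h : Int.fract x = 0
    · have h' : Int.fract (-x) = 0 := Int.fract_neg_eq_zero.2 h
      simp [h, h']
    · have h' : ¬ Int.fract (-x) = 0 := fun h2 => h (Int.fract_neg_eq_zero.1 h2)
      rw [if_neg h, if_neg h', neg_neg, mul_neg, Real.cot_eq_cos_div_sin,
        Real.cot_eq_cos_div_sin, Real.cos_neg, Real.sin_neg, div_neg]
      ring
  have hper : ∀ x : ℝ, g (x + 1) = g x := by
    intro x
    have e1 : Int.fract (x + 1) = Int.fract x := Int.fract_add_one x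
    have e2 : Int.fract (-(x + 1)) = Int.fract (-x) := by
      rw [neg_add, ← sub_eq_add_neg]; exact Int.fract_sub_one _
    have e3 : Real.cot (π * (x + 1)) = Real.cot (π * x) := by
      rw [Real.cot_eq_cos_div_sin, Real.cot_eq_cos_div_sin, mul_add, mul_one,
        Real.cos_add_pi, Real.sin_add_pi, neg_div_neg_eq]
    rw [hg, hg, e1, e2, e3]
  refine ⟨hodd, hper, 10, ?_⟩
  have half : ∀ y : ℝ, 0 < y → y ≤ 1 / 2 → |g y| ≤ 10 := by
    intro y h0 h1
    have f1 : Int.fract y = y := Int.fract_eq_self.2 ⟨h0.le, by linarith⟩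
    have f2 : Int.fract (-y) = 1 - y := by
      rw [Int.fract_neg (by rw [f1]; exact h0.ne'), f1]
    rw [hg, f1, f2, if_neg h0.ne']
    have A := aux_cot_bound y h0 h1
    have B : |1 / (1 - y)| ≤ 2 := by
      rw [abs_of_pos (by apply div_pos <;> linarith), div_le_iff₀ (by linarith)]
      linarith
    exact (abs_add_le _ _).trans (by linarith)
  intro x
  have hp : Function.Periodic g 1 := hper
  have hx : g x = g (Int.fract x) := by
    have := hp.sub_int_mul_eq (x := x) ⌊x⌋
    rw [mul_one] at this
    exact this.symm
  rw [hx]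
  rcases (Int.fract_nonneg x).eq_or_lt with h | h
  · rw [← h, hg]; simp
  · rcases le_or_gt (Int.fract x) (1 / 2) with h2 | h2
    · exact half _ h h2
    · have h3 := Int.fract_lt_one x
      have := half (1 - Int.fract x) (by linarith) (by linarith)
      have e : g (1 - Int.fract x) = - g (Int.fract x) := by
        rw [← hodd, ← hper (-Int.fract x)]; congr 1; ring
      rwa [e, abs_neg] at this
end
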